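/- arXiv:2508.02249 — 2 statements merged into one kernel-verified Lean document; each statement's English description precedes it below -/
import Mathlib

section
/- Let A ∈ ℤ^{m×n} have full row rank, let L ⊆ ℝ^n be the row space of A, and let W ∈ ℤ^{n×(n−m)} be a matrix whose columns form a basis of the lattice L^⊥ ∩ ℤ^n (the integer vectors orthogonal to all rows of A). Then gcd(W) = 1, and consequently, if every m×m submatrix of A has determinant of absolute value at most Δ and some m×m submatrix attains Δ in absolute value, then every (n−m)×(n−m) submatrix of W has determinant of absolute value at most Δ/gcd(A), and this value is attained; i.e., W is (Δ/gcd(A))-modular. -/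
/-!
Extend the columns of `W` to a basis `[W | V]` of `ℤⁿ`: this is possible because `ℤⁿ` modulo the
kernel of `A` is free. As `A * W = 0`, the maximal minor of `A` on a set of columns times
`det [W | V] = ±1` is, up to sign, `det (A * V)` times the minor of `W` on the complementary rows.
In particular `det (A * V)` divides `gcd(A)`, and conversely `gcd(A)` divides `det (A * V)`, which
is a linear combination of maximal minors of `A`. So the maximal minors of `A` are, up to sign,
`gcd(A)` times those of `W`. Finally `gcd(W) = 1`, because `W` has a left inverse.
-/

open Function Matrix

theorem exists_equiv_comp_eq {α β ι : Type*} [Finite ι] (e₀ : α ≃ β) {f : ι → α} {g : ι → β}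
    (hf : Injective f) (hg : Injective g) : ∃ e : α ≃ β, e ∘ f = g := by
  obtain ⟨σ, hσ⟩ := Equiv.Perm.exists_extending_pair (e₀ ∘ f) g (e₀.injective.comp hf) hg
  exact ⟨e₀.trans σ, funext hσ⟩

section CommRing

variable {R m n l : Type*} [CommRing R] [Fintype m] [DecidableEq m] [Fintype n]

theorem det_mul_eq_sum_prod_mul_det_submatrix (A : Matrix m n R) (V : Matrix n m R) :
    (A * V).det = ∑ f : m → n, (∏ j, V (f j) j) * (A.submatrix id f).det := by
  have hrows : (A * V)ᵀ = fun j => ∑ i, V i j • Aᵀ i := by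
    ext j k
    simp [mul_apply, mul_comm]
  rw [← det_transpose, hrows]
  change detRowAlternating.toMultilinearMap (fun j => ∑ i, V i j • Aᵀ i) = _
  simp_rw [MultilinearMap.map_sum, MultilinearMap.map_smul_univ, smul_eq_mul]
  exact Finset.sum_congr rfl fun f _ => congrArg _ (det_transpose (A.submatrix id f))

theorem det_submatrix_mul_det_fromCols [Fintype l] [DecidableEq l] {A : Matrix m n R}
    {W : Matrix n l R} (hAW : A * W = 0) (V : Matrix n m R) (e : l ⊕ m ≃ n) :
    (A.submatrix id (e ∘ Sum.inr)).det * ((fromCols W V).submatrix e id).det =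
      (W.submatrix (e ∘ Sum.inl) id).det * (A * V).det := by
  classical
  let S : Matrix l n R := (1 : Matrix n n R).submatrix (e ∘ Sum.inl) id
  have hS (X : Matrix n (l ⊕ m) R) : S * X = X.submatrix (e ∘ Sum.inl) id :=
    one_submatrix_mul (e ∘ Sum.inl) (Equiv.refl n) X
  have hleft : (fromRows S A).submatrix id e =
      fromBlocks 1 0 (A.submatrix id (e ∘ Sum.inl)) (A.submatrix id (e ∘ Sum.inr)) := by
    ext (i | i) (j | j) <;> simp [S, one_apply]
  have hprod : fromRows S A * fromCols W V =
      fromBlocks (W.submatrix (e ∘ Sum.inl) id) (V.submatrix (e ∘ Sum.inl) id) 0 (A * V) := by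
    rw [fromRows_mul, hS, mul_fromCols, hAW]
    ext (i | i) (j | j) <;> simp
  calc (A.submatrix id (e ∘ Sum.inr)).det * ((fromCols W V).submatrix e id).det
      = ((fromRows S A).submatrix id e * (fromCols W V).submatrix e id).det := by
        rw [det_mul, hleft, det_fromBlocks_zero₁₂, det_one, one_mul]
    _ = (W.submatrix (e ∘ Sum.inl) id).det * (A * V).det := by
        rw [submatrix_mul_equiv, submatrix_id_id, hprod, det_fromBlocks_zero₂₁]

theorem associated_det_submatrix_mul_det [Fintype l] [DecidableEq l] {A : Matrix m n R}
    {W : Matrix n l R} {V : Matrix n m R} {N : Matrix (l ⊕ m) n R}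
    (hN : N * fromCols W V = 1) (hAW : A * W = 0) (e : l ⊕ m ≃ n) :
    Associated (A.submatrix id (e ∘ Sum.inr)).det
      ((W.submatrix (e ∘ Sum.inl) id).det * (A * V).det) := by
  have hunit : IsUnit ((fromCols W V).submatrix e id).det := by
    refine isUnit_det_of_left_inverse (B := N.submatrix id e) ?_
    rw [submatrix_mul_equiv, hN, submatrix_id_id]
  exact ⟨hunit.unit, det_submatrix_mul_det_fromCols hAW V e⟩

section MinorGcd

variable [NormalizedGCDMonoid R]

/-- The number `gcd(A)` for a matrix `A` with rows indexed by `m`: the normalized greatest common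
divisor of the minors of order `|m|`. Columns are chosen by embeddings, so every minor occurs once
for each ordering of its columns. For a matrix of full column rank, use the transpose. -/
noncomputable def minorGcd (A : Matrix m n R) : R :=
  Finset.univ.gcd fun g : m ↪ n => (A.submatrix id g).det

theorem normalize_minorGcd (A : Matrix m n R) : normalize (minorGcd A) = minorGcd A :=
  Finset.normalize_gcd

theorem minorGcd_dvd_det_submatrix (A : Matrix m n R) {f : m → n} (hf : Injective f) :
    minorGcd A ∣ (A.submatrix id f).det :=
  Finset.gcd_dvd (f := fun g : m ↪ n => (A.submatrix id g).det) (Finset.mem_univ ⟨f, hf⟩)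

theorem minorGcd_dvd_det_mul (A : Matrix m n R) (V : Matrix n m R) :
    minorGcd A ∣ (A * V).det := by
  rw [det_mul_eq_sum_prod_mul_det_submatrix]
  refine Finset.dvd_sum fun f _ => Dvd.dvd.mul_left ?_ _
  by_cases hf : Injective f
  · exact minorGcd_dvd_det_submatrix A hf
  · obtain ⟨i, j, hij, hne⟩ := not_injective_iff.mp hf
    rw [det_zero_of_column_eq hne (by simp [hij])]
    exact dvd_zero _

theorem minorGcd_eq_one_of_mul_eq_one {A : Matrix m n R} {V : Matrix n m R} (hAV : A * V = 1) :
    minorGcd A = 1 := by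
  rw [← normalize_minorGcd, normalize_eq_one, isUnit_iff_dvd_one, ← det_one (n := m), ← hAV]
  exact minorGcd_dvd_det_mul A V

theorem associated_minorGcd_det_mul [Finite l] [DecidableEq l] {A : Matrix m n R}
    {W : Matrix n l R} {V : Matrix n m R} {N : Matrix (l ⊕ m) n R}
    (hN : N * fromCols W V = 1) (hAW : A * W = 0) (e₀ : l ⊕ m ≃ n) :
    Associated (minorGcd A) (A * V).det := by
  have := Fintype.ofFinite l
  refine associated_of_dvd_dvd (minorGcd_dvd_det_mul A V) (Finset.dvd_gcd fun g _ => ?_)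
  obtain ⟨e, he⟩ := exists_equiv_comp_eq e₀ Sum.inr_injective g.injective
  rw [← he]
  exact (associated_det_submatrix_mul_det hN hAW e).dvd_iff_dvd_right.mpr (dvd_mul_left _ _)

end MinorGcd

end CommRing

section Exact

variable {R m n l : Type*} [CommRing R] [Fintype n] [Fintype l] {A : Matrix m n R}
  {W : Matrix n l R}

theorem mul_eq_zero_of_exact_mulVec (hAW : Exact W.mulVec A.mulVec) : A * W = 0 := by
  classical
  exact ext_of_mulVec_single fun j => by
    rw [← mulVec_mulVec, hAW.apply_apply_eq_zero, zero_mulVec]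

theorem det_mul_ne_zero_of_exact_mulVec [IsDomain R] [Fintype m] [DecidableEq m] [DecidableEq l]
    {V : Matrix n m R} {N : Matrix (l ⊕ m) n R} (hN : N * fromCols W V = 1)
    (hAW : Exact W.mulVec A.mulVec) : (A * V).det ≠ 0 := by
  intro hdet
  obtain ⟨y, hy, hAVy⟩ := exists_mulVec_eq_zero_iff.mpr hdet
  obtain ⟨z, hz⟩ := (hAW (V *ᵥ y)).mp (by rwa [mulVec_mulVec])
  have hker : fromCols W V *ᵥ Sum.elim (-z) y = 0 := by
    rw [fromCols_mulVec_sumElim, mulVec_neg, hz, neg_add_cancel]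
  have hzero : Sum.elim (-z) y = 0 := by
    rw [← one_mulVec (Sum.elim (-z) y), ← hN, ← mulVec_mulVec, hker, mulVec_zero]
  exact hy (funext fun j => congrFun hzero (Sum.inr j))

section PrincipalIdealRing

variable [IsDomain R] [IsPrincipalIdealRing R]

theorem exists_mul_fromCols_eq_one {κ : Type*} [DecidableEq l] [Fintype κ] [DecidableEq κ]
    (hW : Injective W.mulVec) (hAW : Exact W.mulVec A.mulVec) (hκ : A.rank = Fintype.card κ) :
    ∃ (V : Matrix n κ R) (N : Matrix (l ⊕ κ) n R), N * fromCols W V = 1 := by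
  classical
  have hW_lin : Injective W.mulVecLin := hW
  let bW : Module.Basis l R (LinearMap.range W.mulVecLin) :=
    (Pi.basisFun R l).map (LinearEquiv.ofInjective W.mulVecLin hW_lin)
  have hker : LinearMap.range W.mulVecLin = LinearMap.ker A.mulVecLin :=
    (LinearMap.exact_iff.mp hAW).symm
  let bQ : Module.Basis κ R ((n → R) ⧸ LinearMap.range W.mulVecLin) :=
    ((Module.finBasisOfFinrankEq R (LinearMap.range A.mulVecLin) hκ).reindex
      (Fintype.equivFin κ).symm).map
      ((Submodule.quotEquivOfEq _ _ hker).trans A.mulVecLin.quotKerEquivRange).symm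
  let b := Module.Basis.sumQuot bW bQ
  let V : Matrix n κ R := of fun i j => b (Sum.inr j) i
  have hb : (Pi.basisFun R n).toMatrix b = fromCols W V := by
    ext i (j | j)
    · simp [b, bW, Module.Basis.toMatrix_apply]
    · simp [V, Module.Basis.toMatrix_apply]
  exact ⟨V, b.toMatrix (Pi.basisFun R n), hb ▸ b.toMatrix_mul_toMatrix_flip (Pi.basisFun R n)⟩

variable [NormalizedGCDMonoid R]

theorem minorGcd_transpose_eq_one_of_exact_mulVec [DecidableEq l] (hW : Injective W.mulVec)
    (hAW : Exact W.mulVec A.mulVec) : minorGcd Wᵀ = 1 := by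
  obtain ⟨V, N, hN⟩ := exists_mul_fromCols_eq_one hW hAW (Fintype.card_fin A.rank).symm
  have hleft : N.toRows₁ * W = 1 := by
    rw [← fromRows_toRows N, fromRows_mul_fromCols, ← fromBlocks_one] at hN
    exact (fromBlocks_inj.mp hN).1
  exact minorGcd_eq_one_of_mul_eq_one (V := N.toRows₁ᵀ) <| by
    rw [← transpose_mul, hleft, transpose_one]

variable [Fintype m] [DecidableEq m]

theorem minorGcd_ne_zero_of_exact_mulVec (hW : Injective W.mulVec)
    (hAW : Exact W.mulVec A.mulVec) (hA : A.rank = Fintype.card m) : minorGcd A ≠ 0 := by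
  classical
  obtain ⟨V, N, hN⟩ := exists_mul_fromCols_eq_one hW hAW hA
  exact ne_zero_of_dvd_ne_zero (det_mul_ne_zero_of_exact_mulVec hN hAW) (minorGcd_dvd_det_mul A V)

theorem associated_det_submatrix_mul_minorGcd [DecidableEq l] (hW : Injective W.mulVec)
    (hAW : Exact W.mulVec A.mulVec) (hA : A.rank = Fintype.card m) (e : l ⊕ m ≃ n) :
    Associated (A.submatrix id (e ∘ Sum.inr)).det
      ((W.submatrix (e ∘ Sum.inl) id).det * minorGcd A) := by
  obtain ⟨V, N, hN⟩ := exists_mul_fromCols_eq_one hW hAW hA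
  have hAW_zero := mul_eq_zero_of_exact_mulVec hAW
  exact (associated_det_submatrix_mul_det hN hAW_zero e).trans
    ((associated_minorGcd_det_mul hN hAW_zero e).symm.mul_left _)

end PrincipalIdealRing

end Exact

theorem abs_det_submatrix_eq_div_minorGcd {m n l : Type*} [Fintype m] [DecidableEq m]
    [Fintype n] [Fintype l] [DecidableEq l] {A : Matrix m n ℤ} {W : Matrix n l ℤ}
    (hW : Injective W.mulVec) (hAW : Exact W.mulVec A.mulVec) (hA : A.rank = Fintype.card m)
    (e : l ⊕ m ≃ n) :
    |((W.submatrix (e ∘ Sum.inl) id).det : ℚ)| =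
      (|(A.submatrix id (e ∘ Sum.inr)).det| : ℤ) / ((minorGcd A : ℤ) : ℚ) := by
  have habs : |(A.submatrix id (e ∘ Sum.inr)).det| =
      |(W.submatrix (e ∘ Sum.inl) id).det| * minorGcd A := by
    have hnorm := normalize_eq_normalize_iff_associated.mpr
      (associated_det_submatrix_mul_minorGcd hW hAW hA e)
    rwa [normalize_mul, normalize_minorGcd, ← Int.abs_eq_normalize, ← Int.abs_eq_normalize]
      at hnorm
  have hne : ((minorGcd A : ℤ) : ℚ) ≠ 0 :=
    Int.cast_ne_zero.mpr (minorGcd_ne_zero_of_exact_mulVec hW hAW hA)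
  rw [eq_div_iff hne]
  exact_mod_cast habs.symm

/-- Let `A ∈ ℤ^{m×n}` have full row rank and let the columns of
`W ∈ ℤ^{n×(n−m)}` form a basis of the lattice of integer vectors in the kernel of `A`
(i.e. orthogonal to all rows of `A`). Then `gcd(W) = 1`, and consequently if every
`m×m` submatrix of `A` has `|det| ≤ Δ` and some `m×m` submatrix attains `Δ`, then
every `(n−m)×(n−m)` submatrix of `W` has `|det| ≤ Δ/gcd(A)` and this value is
attained, i.e. `W` is `(Δ/gcd(A))`-modular. -/
theorem kernel_basis_modular (m n Δ : ℕ) (hmn : m ≤ n)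
    (A : Matrix (Fin m) (Fin n) ℤ) (hA : A.rank = m)
    (W : Matrix (Fin n) (Fin (n - m)) ℤ)
    (hWinj : ∀ y : Fin (n - m) → ℤ, W.mulVec y = 0 → y = 0)
    (hWspan : ∀ z : Fin n → ℤ, A.mulVec z = 0 ↔ ∃ y : Fin (n - m) → ℤ, W.mulVec y = z) :
    Finset.univ.gcd (fun g : Fin (n - m) ↪ Fin n => (W.submatrix g id).det) = 1 ∧
    ((∀ g : Fin m ↪ Fin n, |(A.submatrix id g).det| ≤ (Δ : ℤ)) →
      (∃ g : Fin m ↪ Fin n, |(A.submatrix id g).det| = (Δ : ℤ)) →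
      (∀ g : Fin (n - m) ↪ Fin n, (|(W.submatrix g id).det| : ℚ) ≤
        (Δ : ℚ) / ((Finset.univ.gcd (fun g' : Fin m ↪ Fin n => (A.submatrix id g').det) : ℤ) : ℚ)) ∧
      (∃ g : Fin (n - m) ↪ Fin n, (|(W.submatrix g id).det| : ℚ) =
        (Δ : ℚ) / ((Finset.univ.gcd (fun g' : Fin m ↪ Fin n => (A.submatrix id g').det) : ℤ) : ℚ))) := by
  have hW : Injective W.mulVec := (injective_iff_map_eq_zero W.mulVecLin).mpr hWinj
  let e₀ : Fin (n - m) ⊕ Fin m ≃ Fin n :=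
    finSumFinEquiv.trans (finCongr (Nat.sub_add_cancel hmn))
  have hminor (e) := abs_det_submatrix_eq_div_minorGcd hW hWspan (by simpa using hA) e
  have hgcd : (0 : ℚ) ≤ (minorGcd A : ℤ) := by
    rw [← normalize_minorGcd, ← Int.abs_eq_normalize]
    exact mod_cast abs_nonneg (minorGcd A)
  refine ⟨?_, fun hle ⟨g₀, hg₀⟩ => ⟨fun g => ?_, ?_⟩⟩
  · rw [← minorGcd_transpose_eq_one_of_exact_mulVec hW hWspan]
    exact Finset.gcd_congr rfl fun g _ => (det_transpose (W.submatrix g id)).symm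
  · obtain ⟨e, he⟩ := exists_equiv_comp_eq e₀ Sum.inl_injective g.injective
    rw [← he, hminor e]
    exact div_le_div_of_nonneg_right
      (mod_cast hle ⟨e ∘ Sum.inr, e.injective.comp Sum.inr_injective⟩) hgcd
  · obtain ⟨e, he⟩ := exists_equiv_comp_eq e₀ Sum.inr_injective g₀.injective
    refine ⟨⟨e ∘ Sum.inl, e.injective.comp Sum.inl_injective⟩, (hminor e).trans ?_⟩
    rw [he, hg₀]
    rfl
end

section
/- Let Δ ≥ 1 and let A ∈ ℤ^{m×n} have full column rank with n ≥ ⌈(Δ−1)/2⌉·(Δ−1) + 1. Then at least one of the following holds: (i) there exists a nonzero integer vector z ∈ ℤ^n with ‖Az‖_∞ ≤ 1, or (ii) A has an n×n submatrix B with |det B| > Δ. -/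
/-!
Suppose all `n × n` minors of `A` are at most `Δ` in absolute value, and let `B` be a submatrix
with `|det B|` maximal. If `det B = 0`, then `A` has a nonzero kernel vector. Otherwise
`G = ℤⁿ / B ℤⁿ` has order `|det B| ≤ Δ`, and since `⌈(Δ-1)/2⌉ = ⌊Δ/2⌋`, the pigeonhole principle
yields a class `x ∈ G` such that at least `ord x` of the unit vectors `e_i` are congruent to `±x`.
After changing signs of rows of `B`, there is a set `S` of `ord x` indices with `e_i ≡ x` for
`i ∈ S`. Hence `e_i - e_j` for `i, j ∈ S`, as well as `∑ i ∈ S, e_i`, have the form `Bz`.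

One of these `z` works. In coordinates with respect to the rows of `B`, every determinant formed by
rows of `±A` is at most one in absolute value, so all coordinates lie in `[-1, 1]`. The coordinates
in `S` of one row differ by integers, so if `z = B⁻¹(e_i - e_j)` fails for all `i ≠ j` in `S`, then
some row of `±A` has `i`-th coordinate `1` and `j`-th coordinate `-1`. The `2 × 2` minors then force
its other coordinates in `S` to vanish, and the minor on `S` formed by an arbitrary row `c` and the
rows `e_k - e_{k₀}` equals `∑ i ∈ S, c i`, which is therefore at most one in absolute value.
-/

open Finset Matrix

section SignedZeroSum

variable {G ι : Type*} [AddCommGroup G] [Finite G] [Fintype ι]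

theorem card_fiber_add_card_fiber_neg_le [DecidableEq G] {g : ι → G} {x : G}
    (hx : #{i | g i = x ∨ g i = -x} < addOrderOf x) :
    #{i | g i = x} + #{i | g i = -x} ≤ 2 * (Nat.card G / 2) := by
  have hcard : addOrderOf x ≤ Nat.card G := addOrderOf_le_card
  by_cases hneg : -x = x
  · have htwo : addOrderOf x ≤ 2 := by
      refine addOrderOf_le_of_nsmul_eq_zero two_pos ?_
      rw [two_nsmul, ← neg_eq_iff_add_eq_zero, hneg]
    simp only [hneg, or_self] at hx ⊢
    omega
  · have hdisj : Disjoint ({i | g i = x} : Finset ι) ({i | g i = -x} : Finset ι) :=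
      disjoint_filter.2 fun i _ hi hi' ↦ hneg (hi'.symm.trans hi)
    classical
    rw [filter_or, card_union_of_disjoint hdisj] at hx
    omega

theorem exists_addOrderOf_le_card_fiber [DecidableEq G] (g : ι → G)
    (hι : Nat.card G / 2 * (Nat.card G - 1) < Fintype.card ι) :
    ∃ x, addOrderOf x ≤ #{i | g i = x ∨ g i = -x} := by
  by_contra! hfew
  have := Fintype.ofFinite G
  have hzero (i : ι) : g i ≠ 0 := by
    have hfiber : ∀ i, g i ≠ 0 := by simpa [filter_eq_empty_iff] using hfew 0
    exact hfiber i
  have hsum : ∑ x ∈ univ.erase 0, #{i | g i = x} = Fintype.card ι :=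
    (card_eq_sum_card_fiberwise fun i _ ↦ by simp [hzero i]).symm
  have hsum_neg : ∑ x ∈ univ.erase 0, #{i | g i = -x} = Fintype.card ι := by
    rw [← hsum]
    exact sum_equiv (Equiv.neg G) (by simp) (by simp)
  have hcount : 2 * Fintype.card ι ≤ (Nat.card G - 1) * (2 * (Nat.card G / 2)) := calc
    2 * Fintype.card ι = ∑ x ∈ univ.erase 0, (#{i | g i = x} + #{i | g i = -x}) := by
      rw [sum_add_distrib, hsum, hsum_neg, two_mul]
    _ ≤ #(univ.erase (0 : G)) • (2 * (Nat.card G / 2)) :=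
      sum_le_card_nsmul _ _ _ fun x _ ↦ card_fiber_add_card_fiber_neg_le (hfew x)
    _ = (Nat.card G - 1) * (2 * (Nat.card G / 2)) := by
      rw [card_erase_of_mem (mem_univ _), card_univ, Nat.card_eq_fintype_card, smul_eq_mul]
  linarith

theorem exists_units_smul_eq_and_card_nsmul_eq_zero (g : ι → G)
    (hι : Nat.card G / 2 * (Nat.card G - 1) < Fintype.card ι) :
    ∃ (s : ι → ℤˣ) (S : Finset ι) (x : G),
      S.Nonempty ∧ (∀ i ∈ S, s i • g i = x) ∧ #S • x = 0 := by
  classical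
  obtain ⟨x, hx⟩ := exists_addOrderOf_le_card_fiber g hι
  obtain ⟨S, hS, hcard⟩ := exists_subset_card_eq hx
  refine ⟨fun i ↦ if g i = x then 1 else -1, S, x, ?_, fun i hi ↦ ?_, ?_⟩
  · exact card_pos.1 (hcard ▸ addOrderOf_pos x)
  · have hgi : g i = x ∨ g i = -x := by simpa using hS hi
    dsimp only
    split_ifs with hix
    · simp [hix]
    · simp [hgi.resolve_left hix]
  · rw [hcard, addOrderOf_nsmul_eq_zero]

end SignedZeroSum

section MaximalDeterminant

variable {ι K : Type*} [Fintype ι] [DecidableEq ι] [CommRing K]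

theorem det_updateRow_single_sub_single (k₀ : ι) (c : ι → K) :
    ((of fun k ↦ Pi.single k 1 - Pi.single k₀ 1).updateRow k₀ c).det = ∑ i, c i := by
  set M := (of fun k ↦ Pi.single k 1 - Pi.single k₀ 1).updateRow k₀ c
  have hcol : M.updateCol k₀ (fun k ↦ ∑ i, (1 : K) • M k i) =
      (1 : Matrix ι ι K).updateRow k₀ (Function.update c k₀ (∑ i, c i)) := by
    ext k l
    rcases eq_or_ne k₀ k with rfl | hk <;> rcases eq_or_ne k₀ l with rfl | hl
    · simp [M]
    · simp [M, hl.symm]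
    · simp [M, hk.symm]
    · simp [M, hk.symm, hl.symm, one_apply, Pi.single_apply, eq_comm]
  calc M.det = (M.updateCol k₀ fun k ↦ ∑ i, (1 : K) • M k i).det := by
        rw [det_updateCol_sum M k₀ fun _ ↦ 1, one_smul]
    _ = ∑ i, c i := by
        rw [hcol, ← cramer_transpose_apply, transpose_one, cramer_one, Module.End.one_apply,
          Function.update_self]

variable [LinearOrder K]

/-- The standard basis lies in `W` and maximizes `|det|` among the `ι`-tuples in `W`. This is the
normal form in which the rows of a matrix are put by taking their coordinates with respect to a
square submatrix of largest determinant. -/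
structure StdBasisMaximizesDet (W : Set (ι → K)) : Prop where
  single_mem : ∀ i, Pi.single i 1 ∈ W
  abs_det_le_one : ∀ M : Matrix ι ι K, (∀ i, M i ∈ W) → |M.det| ≤ 1

namespace StdBasisMaximizesDet

variable {W : Set (ι → K)} {S : Finset ι}

theorem abs_det_minor_le_one (hW : StdBasisMaximizesDet W) {r : S → ι → K}
    (hr : ∀ i, r i ∈ W) : |(of fun i j : S ↦ r i j).det| ≤ 1 := by
  let M : Matrix ι ι K := fun i ↦ if hi : i ∈ S then r ⟨i, hi⟩ else Pi.single i 1
  have hMW (i : ι) : M i ∈ W := by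
    by_cases hi : i ∈ S
    · simpa [M, hi] using hr ⟨i, hi⟩
    · simpa [M, hi] using hW.single_mem i
  have hblock : M.toSquareBlockProp (· ∈ S) = of fun i j : S ↦ r i j := by
    ext i j
    change M i j = r i j
    simp [M]
  have hblock_compl : M.toSquareBlockProp (· ∉ S) = 1 := by
    ext i j
    change M i j = _
    simp [M, i.2, one_apply, Pi.single_apply, Subtype.ext_iff, eq_comm]
  have hdet : M.det = (of fun i j : S ↦ r i j).det := by
    have hzero : ∀ i, i ∉ S → ∀ j, j ∈ S → M i j = 0 := fun i hi j hj ↦ by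
      simp [M, hi, ne_of_mem_of_not_mem hj hi]
    rw [twoBlockTriangular_det M (· ∈ S) hzero, hblock, hblock_compl, det_one, mul_one]
    congr!
  exact hdet ▸ hW.abs_det_le_one M hMW

theorem abs_sum_le_one_of_star (hW : StdBasisMaximizesDet W) {k₀ : ι} (hk₀ : k₀ ∈ S)
    (hstar : ∀ k ∈ S, k ≠ k₀ →
      ∃ v ∈ W, ∀ l ∈ S, v l = (Pi.single k 1 - Pi.single k₀ 1 : ι → K) l)
    {c : ι → K} (hc : c ∈ W) : |∑ i ∈ S, c i| ≤ 1 := by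
  have hrow (k : S) : ∃ v ∈ W, ∀ l : S,
      v l = (of fun k ↦ Pi.single k 1 - Pi.single ⟨k₀, hk₀⟩ 1).updateRow ⟨k₀, hk₀⟩
        (fun i : S ↦ c i) k l := by
    by_cases hk : k = ⟨k₀, hk₀⟩
    · exact ⟨c, hc, fun l ↦ by rw [hk, updateRow_self]⟩
    · obtain ⟨v, hv, hvS⟩ := hstar k k.2 fun h ↦ hk (Subtype.ext h)
      refine ⟨v, hv, fun l ↦ ?_⟩
      rw [updateRow_ne hk, hvS l l.2]
      simp only [of_apply, Pi.sub_apply, Pi.single_apply, Subtype.ext_iff]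
  choose r hrW hr using hrow
  have hdet := det_updateRow_single_sub_single ⟨k₀, hk₀⟩ fun i : S ↦ c i
  rw [← sum_coe_sort S c, ← hdet]
  convert hW.abs_det_minor_le_one hrW using 3
  ext k l
  exact (hr k l).symm

theorem abs_apply_le_one (hW : StdBasisMaximizesDet W) {c : ι → K} (hc : c ∈ W) (i : ι) :
    |c i| ≤ 1 := by
  simpa using hW.abs_sum_le_one_of_star (mem_singleton_self i)
    (fun k hk hki ↦ absurd (mem_singleton.1 hk) hki) hc

theorem abs_add_le_one (hW : StdBasisMaximizesDet W) {i j : ι} (hij : i ≠ j)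
    {v : ι → K} (hv : v ∈ W) (hvi : v i = 1) (hvj : v j = -1) {c : ι → K} (hc : c ∈ W) :
    |c i + c j| ≤ 1 := by
  rw [← sum_pair hij]
  refine hW.abs_sum_le_one_of_star (k₀ := j) (by simp) (fun k hk hkj ↦ ⟨v, hv, ?_⟩) hc
  obtain rfl : k = i := by simpa [hkj] using hk
  simp [hij, hij.symm, hvi, hvj]

variable [IsStrictOrderedRing K]

theorem exists_eq_one_eq_neg_one (hW : StdBasisMaximizesDet W) (hneg : ∀ w ∈ W, -w ∈ W)
    {v : ι → K} (hv : v ∈ W) {i j : ι} (hint : v i - v j ∈ Set.range ((↑) : ℤ → K))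
    (hlt : 1 < |v i - v j|) : ∃ w ∈ W, w i = 1 ∧ w j = -1 := by
  obtain ⟨t, ht⟩ := hint
  have hi := abs_le.1 (hW.abs_apply_le_one hv i)
  have hj := abs_le.1 (hW.abs_apply_le_one hv j)
  have htwo : 2 ≤ |v i - v j| := by
    rw [← ht] at hlt ⊢
    exact_mod_cast hlt
  rcases le_abs.1 htwo with hle | hle
  · exact ⟨v, hv, by linarith, by linarith⟩
  · exact ⟨-v, hneg v hv, by rw [Pi.neg_apply]; linarith, by rw [Pi.neg_apply]; linarith⟩

theorem abs_sub_le_one_or_abs_sum_le_one (hW : StdBasisMaximizesDet W)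
    (hneg : ∀ w ∈ W, -w ∈ W) (hS : S.Nonempty)
    (hint : ∀ w ∈ W, ∀ i ∈ S, ∀ j ∈ S, w i - w j ∈ Set.range ((↑) : ℤ → K)) :
    (∃ i ∈ S, ∃ j ∈ S, i ≠ j ∧ ∀ w ∈ W, |w i - w j| ≤ 1) ∨ ∀ w ∈ W, |∑ i ∈ S, w i| ≤ 1 := by
  refine or_iff_not_imp_left.2 fun hlarge ↦ ?_
  push Not at hlarge
  have hpair : ∀ i ∈ S, ∀ j ∈ S, i ≠ j → ∃ v ∈ W, v i = 1 ∧ v j = -1 := by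
    intro i hi j hj hij
    obtain ⟨v, hv, hlt⟩ := hlarge i hi j hj hij
    exact hW.exists_eq_one_eq_neg_one hneg hv (hint v hv i hi j hj) hlt
  have hadd : ∀ i ∈ S, ∀ j ∈ S, i ≠ j → ∀ w ∈ W, |w i + w j| ≤ 1 := by
    intro i hi j hj hij w hw
    obtain ⟨v, hv, hvi, hvj⟩ := hpair i hi j hj hij
    exact hW.abs_add_le_one hij hv hvi hvj hw
  obtain ⟨k₀, hk₀⟩ := hS
  intro w hw
  refine hW.abs_sum_le_one_of_star hk₀ (fun k hk hkk₀ ↦ ?_) hw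
  obtain ⟨v, hv, hvk, hvk₀⟩ := hpair k hk k₀ hk₀ hkk₀
  refine ⟨v, hv, fun l hl ↦ ?_⟩
  by_cases hlk : l = k
  · simp [hlk, hvk, hkk₀]
  by_cases hlk₀ : l = k₀
  · simp [hlk₀, hvk₀, hkk₀.symm]
  have hle := abs_le.1 (hadd l hl k hk hlk v hv)
  have hge := abs_le.1 (hadd l hl k₀ hk₀ hlk₀ v hv)
  simp only [Pi.sub_apply, Pi.single_eq_of_ne hlk, Pi.single_eq_of_ne hlk₀]
  linarith

end StdBasisMaximizesDet

end MaximalDeterminant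

section KernelVector

variable {m n : Type*} [Fintype n] [DecidableEq n]

theorem exists_mulVec_eq_zero_of_det_submatrix_eq_zero_of_field {K : Type*} [Field K]
    {A : Matrix m n K} (hA : ∀ f : n → m, (A.submatrix f id).det = 0) :
    ∃ z ≠ 0, A *ᵥ z = 0 := by
  have hspan : Submodule.span K (Set.range A.row) < ⊤ := by
    refine lt_top_iff_ne_top.2 fun htop ↦ ?_
    obtain ⟨κ, a, -, hspan, hli⟩ := exists_linearIndependent' K A.row
    let b : Module.Basis κ K (n → K) := .mk hli (by rw [hspan, htop])
    let e : n ≃ κ := (Pi.basisFun K n).indexEquiv b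
    have hunit : IsUnit (A.submatrix (a ∘ e) id) :=
      linearIndependent_rows_iff_isUnit.1 (hli.comp e e.injective)
    exact ((isUnit_iff_isUnit_det _).1 hunit).ne_zero (hA _)
  obtain ⟨φ, hφ, hker⟩ := Submodule.exists_le_ker_of_lt_top _ hspan
  obtain ⟨z, rfl⟩ := (dotProductEquiv K n).surjective φ
  refine ⟨z, fun hz ↦ hφ (by rw [hz, map_zero]), funext fun i ↦ ?_⟩
  exact (dotProduct_comm _ _).trans (hker (Submodule.subset_span ⟨i, rfl⟩))

theorem exists_mulVec_eq_zero_of_det_submatrix_eq_zero {R : Type*} [CommRing R] [IsDomain R]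
    {A : Matrix m n R} (hA : ∀ f : n → m, (A.submatrix f id).det = 0) :
    ∃ z ≠ 0, A *ᵥ z = 0 := by
  let φ := algebraMap R (FractionRing R)
  have hφ : Function.Injective φ := IsFractionRing.injective R (FractionRing R)
  obtain ⟨w, hw, hAw⟩ := exists_mulVec_eq_zero_of_det_submatrix_eq_zero_of_field
    (A := A.map φ) fun f ↦ by
      rw [submatrix_map, ← RingHom.mapMatrix_apply, ← RingHom.map_det, hA, map_zero]
  obtain ⟨b, hb⟩ := IsLocalization.exist_integer_multiples_of_finite (nonZeroDivisors R) w
  choose z hz using hb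
  have hzw : φ ∘ z = (b : R) • w := funext hz
  refine ⟨z, ?_, funext fun i ↦ hφ ?_⟩
  · rintro rfl
    have hbw : (b : R) • w = 0 := by rw [← hzw]; ext; simp
    exact hw ((smul_eq_zero.1 hbw).resolve_left (nonZeroDivisors.coe_ne_zero b))
  · rw [RingHom.map_mulVec, hzw, mulVec_smul, hAw]
    simp

end KernelVector

section RowCoordinates

variable {m n : Type*} [Fintype m]

/-- The coordinate vectors, with respect to the rows of `B`, of the members of `V`. They are
rational, since the rows of `B` need not generate `ℤⁿ`. -/
def rowCoords (B : Matrix m n ℤ) (V : Set (n → ℤ)) : Set (m → ℚ) :=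
  {c | ∃ v ∈ V, c ᵥ* B.map (↑) = fun i ↦ (v i : ℚ)}

theorem neg_mem_rowCoords {B : Matrix m n ℤ} {V : Set (n → ℤ)} (hneg : ∀ v ∈ V, -v ∈ V) :
    ∀ c ∈ rowCoords B V, -c ∈ rowCoords B V := by
  rintro c ⟨v, hv, hcv⟩
  exact ⟨-v, hneg v hv, by rw [neg_vecMul, hcv]; ext; simp⟩

variable [Fintype n]

theorem dotProduct_mulVec_eq_of_vecMul_eq {B : Matrix m n ℤ} {c : m → ℚ} {v : n → ℤ}
    (hcv : c ᵥ* B.map (↑) = fun i ↦ (v i : ℚ)) (z : n → ℤ) :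
    (c ⬝ᵥ fun i ↦ ((B *ᵥ z) i : ℚ)) = (v ⬝ᵥ z : ℤ) := by
  have hBz : (fun i ↦ ((B *ᵥ z) i : ℚ)) = B.map (↑) *ᵥ fun i ↦ (z i : ℚ) :=
    funext (RingHom.map_mulVec (Int.castRingHom ℚ) B z)
  rw [hBz, dotProduct_mulVec, hcv]
  simp [dotProduct]

variable [DecidableEq n] {B : Matrix n n ℤ} {V : Set (n → ℤ)}

theorem abs_dotProduct_le_one_of_forall_rowCoords (hB : B.det ≠ 0) {z : n → ℤ}
    (hz : ∀ c ∈ rowCoords B V, |c ⬝ᵥ fun i ↦ ((B *ᵥ z) i : ℚ)| ≤ 1) :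
    ∀ v ∈ V, |v ⬝ᵥ z| ≤ 1 := by
  intro v hv
  have hunit : IsUnit (B.map ((↑) : ℤ → ℚ)) := by
    rw [isUnit_iff_isUnit_det, isUnit_iff_ne_zero, ← Int.cast_det]
    exact_mod_cast hB
  obtain ⟨c, hcv⟩ := vecMul_surjective_iff_isUnit.2 hunit fun i ↦ (v i : ℚ)
  have hle := hz c ⟨v, hv, hcv⟩
  rw [dotProduct_mulVec_eq_of_vecMul_eq hcv] at hle
  exact_mod_cast hle

theorem stdBasisMaximizesDet_rowCoords (hB : B.det ≠ 0) (hBV : ∀ i, B i ∈ V)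
    (hmax : ∀ M : Matrix n n ℤ, (∀ i, M i ∈ V) → |M.det| ≤ |B.det|) :
    StdBasisMaximizesDet (rowCoords B V) where
  single_mem i := ⟨B i, hBV i, by ext; simp⟩
  abs_det_le_one C hC := by
    choose M hMV hM using hC
    have hCB : C * B.map (↑) = (of M).map ((↑) : ℤ → ℚ) := by
      ext i j
      exact congrFun (hM i) j
    have hdet : C.det * B.det = (of M).det := by
      rw [Int.cast_det, Int.cast_det, ← hCB, det_mul]
    refine le_of_mul_le_mul_right ?_ (by simpa using hB : 0 < |(B.det : ℚ)|)
    rw [one_mul, ← abs_mul, hdet]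
    exact_mod_cast hmax (of M) hMV

end RowCoordinates

section ShortVector

variable {n : Type*} [Fintype n] [DecidableEq n]

theorem natCard_quotient_range_mulVecLin {B : Matrix n n ℤ} (hB : B.det ≠ 0) :
    Nat.card ((n → ℤ) ⧸ LinearMap.range B.mulVecLin) = B.det.natAbs := by
  have hinj : Function.Injective B.mulVecLin := mulVec_injective_of_det_ne_zero hB
  rw [← Submodule.natAbs_det_equiv _ (LinearEquiv.ofInjective B.mulVecLin hinj),
    ← LinearMap.det_toLin']
  rfl

theorem exists_single_sub_single_and_sum_single_mem_range {B : Matrix n n ℤ} (hB : B.det ≠ 0)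
    (hn : B.det.natAbs / 2 * (B.det.natAbs - 1) < Fintype.card n) :
    ∃ (s : n → ℤˣ) (S : Finset n), S.Nonempty ∧
      (∀ i ∈ S, ∀ j ∈ S, ∃ z, B *ᵥ z = Pi.single i ↑(s i) - Pi.single j ↑(s j)) ∧
      ∃ z, B *ᵥ z = ∑ i ∈ S, Pi.single i ↑(s i) := by
  let Λ := LinearMap.range B.mulVecLin
  rw [← natCard_quotient_range_mulVecLin hB] at hn
  have : Finite ((n → ℤ) ⧸ Λ) := Nat.finite_of_card_ne_zero <| by
    rwa [natCard_quotient_range_mulVecLin hB, Int.natAbs_ne_zero]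
  obtain ⟨s, S, x, hS, hsx, hSx⟩ :=
    exists_units_smul_eq_and_card_nsmul_eq_zero (fun i ↦ Λ.mkQ (Pi.single i 1)) hn
  have hmk : ∀ i ∈ S, Λ.mkQ (Pi.single i ↑(s i)) = x := by
    intro i hi
    rw [← hsx i hi, Units.smul_def, ← map_smul, ← Pi.single_smul, smul_eq_mul, mul_one]
  refine ⟨s, S, hS, fun i hi j hj ↦ ?_, ?_⟩
  · change _ ∈ Λ
    rw [← Λ.ker_mkQ, LinearMap.mem_ker, map_sub, hmk i hi, hmk j hj, sub_self]
  · change _ ∈ Λ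
    rw [← Λ.ker_mkQ, LinearMap.mem_ker, map_sum, sum_congr rfl hmk, sum_const, hSx]

theorem exists_ne_zero_abs_dotProduct_le_one_of_mulVec_eq {V : Set (n → ℤ)}
    (hneg : ∀ v ∈ V, -v ∈ V) {B : Matrix n n ℤ} (hB : B.det ≠ 0) (hBV : ∀ i, B i ∈ V)
    (hmax : ∀ M : Matrix n n ℤ, (∀ i, M i ∈ V) → |M.det| ≤ |B.det|) {S : Finset n}
    (hS : S.Nonempty)
    (hsub : ∀ i ∈ S, ∀ j ∈ S, ∃ z, B *ᵥ z = Pi.single i 1 - Pi.single j 1)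
    (hsum : ∃ z, B *ᵥ z = ∑ i ∈ S, Pi.single i 1) :
    ∃ z ≠ 0, ∀ v ∈ V, |v ⬝ᵥ z| ≤ 1 := by
  have hsub_dot (c : n → ℚ) {z : n → ℤ} {i j : n} (hz : B *ᵥ z = Pi.single i 1 - Pi.single j 1) :
      (c ⬝ᵥ fun k ↦ ((B *ᵥ z) k : ℚ)) = c i - c j := by
    simp [hz, dotProduct, mul_sub, Pi.single_apply]
  have hint : ∀ c ∈ rowCoords B V, ∀ i ∈ S, ∀ j ∈ S, c i - c j ∈ Set.range ((↑) : ℤ → ℚ) := by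
    rintro c ⟨v, -, hcv⟩ i hi j hj
    obtain ⟨z, hz⟩ := hsub i hi j hj
    exact ⟨v ⬝ᵥ z, by rw [← dotProduct_mulVec_eq_of_vecMul_eq hcv, hsub_dot c hz]⟩
  rcases (stdBasisMaximizesDet_rowCoords hB hBV hmax).abs_sub_le_one_or_abs_sum_le_one
    (neg_mem_rowCoords hneg) hS hint with ⟨i, hi, j, hj, hij, hle⟩ | hle
  · obtain ⟨z, hz⟩ := hsub i hi j hj
    refine ⟨z, ?_, abs_dotProduct_le_one_of_forall_rowCoords hB fun c hc ↦ ?_⟩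
    · rintro rfl
      simpa [hij] using congrFun hz i
    · simpa only [hsub_dot c hz] using hle c hc
  · obtain ⟨z, hz⟩ := hsum
    refine ⟨z, ?_, abs_dotProduct_le_one_of_forall_rowCoords hB fun c hc ↦ ?_⟩
    · rintro rfl
      obtain ⟨k, hk⟩ := hS
      simpa [hk, Pi.single_apply] using congrFun hz k
    · simpa [hz, dotProduct, Pi.single_apply] using hle c hc

theorem exists_ne_zero_abs_dotProduct_le_one {V : Set (n → ℤ)} (hneg : ∀ v ∈ V, -v ∈ V)
    {B : Matrix n n ℤ} (hB : B.det ≠ 0) (hBV : ∀ i, B i ∈ V)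
    (hmax : ∀ M : Matrix n n ℤ, (∀ i, M i ∈ V) → |M.det| ≤ |B.det|)
    (hn : B.det.natAbs / 2 * (B.det.natAbs - 1) < Fintype.card n) :
    ∃ z ≠ 0, ∀ v ∈ V, |v ⬝ᵥ z| ≤ 1 := by
  obtain ⟨s, S, hS, hsub, hsum⟩ := exists_single_sub_single_and_sum_single_mem_range hB hn
  -- `V` is symmetric, so the signs can be absorbed into the rows of `B`.
  let D : Matrix n n ℤ := diagonal fun i ↦ ↑(s i)
  have hD (i : n) : D *ᵥ Pi.single i ↑(s i) = Pi.single i 1 := by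
    rw [diagonal_mulVec_single, Int.units_coe_mul_self]
  have hrow (i : n) : (D * B) i ∈ V := by
    have hDB : (D * B) i = s i • B i := funext fun j ↦ diagonal_mul ..
    rcases Int.units_eq_one_or (s i) with hs | hs
    · simpa [hDB, hs] using hBV i
    · simpa [hDB, hs] using hneg _ (hBV i)
  have hdet : |(D * B).det| = |B.det| := by
    have habs (i : n) : |(s i : ℤ)| = 1 := Int.isUnit_iff_abs_eq.1 (s i).isUnit
    simp [D, det_mul, abs_mul, abs_prod, habs]
  refine exists_ne_zero_abs_dotProduct_le_one_of_mulVec_eq hneg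
    (abs_pos.1 (hdet ▸ abs_pos.2 hB)) hrow (fun M hM ↦ hdet ▸ hmax M hM) hS
    (fun i hi j hj ↦ ?_) ?_
  · obtain ⟨z, hz⟩ := hsub i hi j hj
    exact ⟨z, by rw [← mulVec_mulVec, hz, mulVec_sub, hD, hD]⟩
  · obtain ⟨z, hz⟩ := hsum
    exact ⟨z, by simp only [← mulVec_mulVec, hz, mulVec_sum, hD]⟩

end ShortVector

section Subdeterminants

variable {m n : Type*} {A : Matrix m n ℤ}

/-- The rows of `A` and their negatives: the closure of the row set under negation, which changes
neither the values `|det|` of square submatrices nor the condition `‖Az‖_∞ ≤ 1`. -/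
def signedRows (A : Matrix m n ℤ) : Set (n → ℤ) :=
  Set.range fun p : ℤˣ × m ↦ p.1 • A p.2

theorem row_mem_signedRows (i : m) : A i ∈ signedRows A := ⟨(1, i), one_smul _ _⟩

theorem neg_mem_signedRows : ∀ v ∈ signedRows A, -v ∈ signedRows A := by
  rintro _ ⟨p, rfl⟩
  exact ⟨(-p.1, p.2), Units.neg_smul _ _⟩

variable [Fintype n] [DecidableEq n]

theorem exists_abs_det_eq_abs_det_submatrix {M : Matrix n n ℤ} (hM : ∀ i, M i ∈ signedRows A) :
    ∃ f : n → m, |M.det| = |(A.submatrix f id).det| := by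
  choose p hp using hM
  refine ⟨fun i ↦ (p i).2, ?_⟩
  have hM : M = of fun i j ↦ ((p i).1 : ℤ) * A.submatrix (fun i ↦ (p i).2) id i j := by
    ext i j
    exact (congrFun (hp i) j).symm
  have habs (i : n) : |((p i).1 : ℤ)| = 1 := Int.isUnit_iff_abs_eq.1 (p i).1.isUnit
  rw [hM, det_mul_column, abs_mul, abs_prod, prod_congr rfl fun i _ ↦ habs i, prod_const_one,
    one_mul]

theorem exists_ne_zero_abs_mulVec_le_one {Δ : ℕ}
    (hA : ∀ f : n → m, |(A.submatrix f id).det| ≤ Δ)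
    (hn : Δ / 2 * (Δ - 1) < Fintype.card n) :
    ∃ z ≠ 0, ∀ i, |(A *ᵥ z) i| ≤ 1 := by
  by_cases hsing : ∀ f : n → m, (A.submatrix f id).det = 0
  · obtain ⟨z, hz, hAz⟩ := exists_mulVec_eq_zero_of_det_submatrix_eq_zero hsing
    exact ⟨z, hz, by simp [hAz]⟩
  push Not at hsing
  obtain ⟨f₀, hf₀⟩ := hsing
  have : Nonempty (n → m) := ⟨f₀⟩
  obtain ⟨_, ⟨f, rfl⟩, hmax⟩ := BddAbove.exists_isGreatest_of_nonempty
    ⟨(Δ : ℤ), Set.forall_mem_range.2 hA⟩ (Set.range_nonempty _)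
  replace hmax (g : n → m) := hmax ⟨g, rfl⟩
  have hdet : (A.submatrix f id).det ≠ 0 := abs_pos.1 ((abs_pos.2 hf₀).trans_le (hmax f₀))
  have hΔ : (A.submatrix f id).det.natAbs ≤ Δ := by
    zify
    exact hA f
  obtain ⟨z, hz, hle⟩ := exists_ne_zero_abs_dotProduct_le_one neg_mem_signedRows hdet
    (fun i ↦ row_mem_signedRows (f i))
    (fun M hM ↦ by
      obtain ⟨g, hg⟩ := exists_abs_det_eq_abs_det_submatrix hM
      exact hg ▸ hmax g)
    ((Nat.mul_le_mul (Nat.div_le_div_right hΔ) (Nat.sub_le_sub_right hΔ 1)).trans_lt hn)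
  exact ⟨z, hz, fun i ↦ hle _ (row_mem_signedRows i)⟩

end Subdeterminants

theorem svp_or_large_subdeterminant_general {m n : Type*} [Fintype n] [DecidableEq n] (Δ : ℕ)
    (A : Matrix m n ℤ) (hn : Δ / 2 * (Δ - 1) < Fintype.card n) :
    (∃ z : n → ℤ, z ≠ 0 ∧ ∀ i, |A.mulVec z i| ≤ 1) ∨
    (∃ f : n → m, Function.Injective f ∧ (Δ : ℤ) < |(A.submatrix f id).det|) := by
  refine or_iff_not_imp_right.2 fun hsmall ↦ exists_ne_zero_abs_mulVec_le_one (fun f ↦ ?_) hn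
  push Not at hsmall
  by_cases hf : Function.Injective f
  · exact hsmall f hf
  · obtain ⟨i, j, hij, hne⟩ := Function.not_injective_iff.1 hf
    simp [det_zero_of_row_eq (M := A.submatrix f id) hne (by ext; simp [hij])]

/-- Let `Δ ≥ 1` and let `A ∈ ℤ^{m×n}` have full column rank with
`n ≥ ⌈(Δ−1)/2⌉·(Δ−1) + 1`. Then either there is a nonzero integer `z` with
`‖Az‖_∞ ≤ 1`, or `A` has an `n×n` submatrix `B` with `|det B| > Δ`. -/
theorem svp_or_large_subdeterminant (Δ m n : ℕ) (hΔ : 1 ≤ Δ)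
    (A : Matrix (Fin m) (Fin n) ℤ) (hrank : A.rank = n)
    (hn : ((Δ - 1) + 1) / 2 * (Δ - 1) + 1 ≤ n) :
    (∃ z : Fin n → ℤ, z ≠ 0 ∧ ∀ i, |A.mulVec z i| ≤ 1) ∨
    (∃ f : Fin n → Fin m, Function.Injective f ∧ (Δ : ℤ) < |(A.submatrix f id).det|) := by
  rw [Nat.sub_add_cancel hΔ] at hn
  exact svp_or_large_subdeterminant_general Δ A (by rwa [Fintype.card_fin])
end
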